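/- Let G be a cubic bipartite simple graph with a proper 2-coloring of its vertices by black and white, and let S be a set of vertices of G such that exactly three edges of G have one endpoint in S and the other endpoint outside S, and such that these three edges have pairwise distinct endpoints in S. Then the three endpoints in S of these cut edges all have the same color. -/

import Mathlib

/-!
Give every vertex the weight `+1` or `-1` according to its color, and sum the weight of the
`S`-endpoint `u` over all ordered adjacent pairs `(u, v)` with `u ∈ S`. As `G` is cubic, this sum is
three times the total weight of `S`. The pairs with `v ∈ S` cancel, because adjacent vertices have
opposite weights, so the sum is also the total weight of the endpoints in `S` of the three cut
edges. Hence three signs add up to a multiple of `3`, which forces them to be equal.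
-/

/-- Let `G` be a cubic bipartite simple graph with a proper 2-coloring
`c : V → Bool` (black/white), and let `S` be a set of vertices such that
exactly three edges of `G` cross from `S` to its complement, namely
`{a₁,b₁}, {a₂,b₂}, {a₃,b₃}` with `a₁, a₂, a₃ ∈ S` pairwise distinct and
`b₁, b₂, b₃ ∉ S`.  Then `a₁, a₂, a₃` all have the same color. -/
theorem stmt_16 {V : Type*} [Fintype V] (G : SimpleGraph V)
    (hcubic : ∀ v, (G.neighborSet v).ncard = 3)
    (c : V → Bool) (hc : ∀ u v, G.Adj u v → c u ≠ c v)
    (S : Set V) (a₁ a₂ a₃ b₁ b₂ b₃ : V)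
    (ha₁ : a₁ ∈ S) (ha₂ : a₂ ∈ S) (ha₃ : a₃ ∈ S)
    (h12 : a₁ ≠ a₂) (h23 : a₂ ≠ a₃) (h13 : a₁ ≠ a₃)
    (hb₁ : b₁ ∉ S) (hb₂ : b₂ ∉ S) (hb₃ : b₃ ∉ S)
    (hab₁ : G.Adj a₁ b₁) (hab₂ : G.Adj a₂ b₂) (hab₃ : G.Adj a₃ b₃)
    (honly : ∀ u v, G.Adj u v → u ∈ S → v ∉ S →
      (u, v) ∈ ({(a₁, b₁), (a₂, b₂), (a₃, b₃)} : Set (V × V))) :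
    c a₁ = c a₂ ∧ c a₂ = c a₃ := by
  classical
  let w : V → ℤ := fun v => if c v then 1 else -1
  have hw : ∀ u v, G.Adj u v → w u = - w v := by
    intro u v h
    have := hc u v h
    simp only [w]
    cases hu : c u <;> cases hv : c v <;> simp_all
  let F : V → V → ℤ := fun u v => if G.Adj u v then w u else 0
  let T : Finset V := Finset.univ.filter (· ∈ S)
  let T' : Finset V := Finset.univ.filter (· ∉ S)
  have hdeg : ∀ u, ∑ v, F u v = 3 * w u := by
    intro u
    have h3 : (Finset.univ.filter (G.Adj u)).card = 3 := by
      rw [← hcubic u, ← Set.ncard_coe_finset]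
      congr 1
      ext v
      simp
    simp only [F]
    rw [← Finset.sum_filter, Finset.sum_const, h3]
    simp
  have hsplit : ∀ u, ∑ v, F u v = ∑ v ∈ T, F u v + ∑ v ∈ T', F u v := fun u =>
    (Finset.sum_filter_add_sum_filter_not _ _ _).symm
  have hin : ∑ u ∈ T, ∑ v ∈ T, F u v = 0 := by
    have hanti : ∑ u ∈ T, ∑ v ∈ T, F u v = - ∑ u ∈ T, ∑ v ∈ T, F u v := by
      conv_lhs => rw [Finset.sum_comm]
      simp only [← Finset.sum_neg_distrib]
      refine Finset.sum_congr rfl fun u _ => Finset.sum_congr rfl fun v _ => ?_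
      by_cases h : G.Adj u v
      · simp [F, h, h.symm, hw u v h]
      · have h' : ¬ G.Adj v u := fun h' => h h'.symm
        simp [F, h, h']
    lia
  have hout : ∑ u ∈ T, ∑ v ∈ T', F u v = w a₁ + w a₂ + w a₃ := by
    rw [← Finset.sum_product']
    have hsub : ({(a₁, b₁), (a₂, b₂), (a₃, b₃)} : Finset (V × V)) ⊆ T ×ˢ T' := by
      intro p hp
      simp only [Finset.mem_insert, Finset.mem_singleton] at hp
      rcases hp with rfl | rfl | rfl <;> simp [T, T', *]
    rw [← Finset.sum_subset hsub]
    · rw [Finset.sum_insert (by simp [h12, h13]), Finset.sum_insert (by simp [h23]),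
        Finset.sum_singleton]
      simp [F, hab₁, hab₂, hab₃, add_assoc]
    · rintro ⟨u, v⟩ hp hn
      have hp' : u ∈ S ∧ v ∉ S := by simpa [T, T'] using hp
      simp only [F]
      refine if_neg fun h => hn ?_
      simpa using honly u v h hp'.1 hp'.2
  have key : 3 * ∑ u ∈ T, w u = w a₁ + w a₂ + w a₃ := by
    rw [Finset.mul_sum, ← hout, ← zero_add (∑ u ∈ T, ∑ v ∈ T', F u v), ← hin,
      ← Finset.sum_add_distrib]
    exact Finset.sum_congr rfl fun u _ => by rw [← hdeg, hsplit]
  simp only [w] at key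
  cases h1 : c a₁ <;> cases h2 : c a₂ <;> cases h3 : c a₃ <;> simp [h1, h2, h3] at key ⊢ <;> lia
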